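/- Given a Lie algebra 𝔤 with an invariant symmetric bilinear form ⟨·,·⟩ (so ⟨[x,y],z⟩ = ⟨x,[y,z]⟩), the string Lie 2-algebra data 𝔴 = 𝔤, 𝔳 = ℝ, μ₁ = 0, μ₂(w₁,w₂) = [w₁,w₂], μ₂(w,v) = 0, μ₃(w₁,w₂,w₃) = ⟨w₁,[w₂,w₃]⟩ satisfies all the axioms of a 2-term L∞-algebra. -/

import Mathlib

/-!
Since `μ₁ = 0` and `μ₂' = 0`, `jacobi₃` is the Jacobi identity of the Lie algebra, and what
remains is the total antisymmetry of `μ₃ = ⟨·,[·,·]⟩`, which follows from invariance and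
antisymmetry of the bracket, and the quartic identity `jacobi₅`.
In the latter each of the three pairings
`⟨[w₁,w₂],[w₃,w₄]⟩`, `⟨[w₂,w₃],[w₄,w₁]⟩`, `⟨[w₁,w₃],[w₂,w₄]⟩` occurs twice by symmetry;
moving `w₁` out by invariance, the sum becomes twice the pairing of `w₁` with the
Jacobi identity for `w₂, w₃, w₄`.
-/

/-- A 2-term L∞-algebra: a complex `𝔳 →μ₁ 𝔴` (with `𝔳` in degree −1 and `𝔴`
in degree 0), together with graded antisymmetric products
`μ₂ : 𝔴∧𝔴 → 𝔴`, `μ₂' : 𝔴∧𝔳 → 𝔳` and `μ₃ : 𝔴∧𝔴∧𝔴 → 𝔳` satisfying the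
higher homotopy Jacobi identities. -/
structure TwoTermLInfty (R : Type*) [CommRing R] (V W : Type*)
    [AddCommGroup V] [Module R V] [AddCommGroup W] [Module R W] where
  μ₁ : V →ₗ[R] W
  μ₂ : W →ₗ[R] W →ₗ[R] W
  μ₂' : W →ₗ[R] V →ₗ[R] V
  μ₃ : W →ₗ[R] W →ₗ[R] W →ₗ[R] V
  μ₂_antisymm : ∀ w₁ w₂, μ₂ w₁ w₂ = - μ₂ w₂ w₁
  μ₃_antisymm₁₂ : ∀ w₁ w₂ w₃, μ₃ w₁ w₂ w₃ = - μ₃ w₂ w₁ w₃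
  μ₃_antisymm₂₃ : ∀ w₁ w₂ w₃, μ₃ w₁ w₂ w₃ = - μ₃ w₁ w₃ w₂
  jacobi₁ : ∀ w v, μ₁ (μ₂' w v) = μ₂ w (μ₁ v)
  jacobi₂ : ∀ v₁ v₂, μ₂' (μ₁ v₁) v₂ = - μ₂' (μ₁ v₂) v₁
  jacobi₃ : ∀ w₁ w₂ w₃, μ₁ (μ₃ w₁ w₂ w₃) =
    - μ₂ (μ₂ w₁ w₂) w₃ - μ₂ (μ₂ w₃ w₁) w₂ - μ₂ (μ₂ w₂ w₃) w₁
  jacobi₄ : ∀ v w₁ w₂, μ₃ (μ₁ v) w₁ w₂ =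
    - μ₂' (μ₂ w₁ w₂) v - μ₂' w₂ (μ₂' w₁ v) + μ₂' w₁ (μ₂' w₂ v)
  jacobi₅ : ∀ w₁ w₂ w₃ w₄,
    - μ₂' w₄ (μ₃ w₁ w₂ w₃) + μ₂' w₃ (μ₃ w₄ w₁ w₂) - μ₂' w₂ (μ₃ w₃ w₄ w₁)
      + μ₂' w₁ (μ₃ w₂ w₃ w₄)
    = μ₃ (μ₂ w₁ w₂) w₃ w₄ - μ₃ (μ₂ w₂ w₃) w₄ w₁ + μ₃ (μ₂ w₃ w₄) w₁ w₂
      - μ₃ (μ₂ w₄ w₁) w₂ w₃ - μ₃ (μ₂ w₁ w₃) w₂ w₄ - μ₃ (μ₂ w₂ w₄) w₁ w₃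

/-- String Lie 2-algebra: given a Lie algebra `𝔤` over `ℝ` with an invariant
symmetric bilinear form `⟨·,·⟩`, the data `𝔴 = 𝔤`, `𝔳 = ℝ`, `μ₁ = 0`,
`μ₂(w₁,w₂) = [w₁,w₂]`, `μ₂(w,v) = 0`, `μ₃(w₁,w₂,w₃) = ⟨w₁,[w₂,w₃]⟩` satisfy
all the axioms of a 2-term L∞-algebra. -/
theorem string_lie_two_algebra
    {g : Type*} [LieRing g] [LieAlgebra ℝ g]
    (B : g →ₗ[ℝ] g →ₗ[ℝ] ℝ)
    (hsymm : ∀ x y : g, B x y = B y x)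
    (hinv : ∀ x y z : g, B ⁅x, y⁆ z = B x ⁅y, z⁆) :
    ∃ L : TwoTermLInfty ℝ ℝ g,
      (∀ v : ℝ, L.μ₁ v = 0) ∧
      (∀ w₁ w₂ : g, L.μ₂ w₁ w₂ = ⁅w₁, w₂⁆) ∧
      (∀ (w : g) (v : ℝ), L.μ₂' w v = 0) ∧
      (∀ w₁ w₂ w₃ : g, L.μ₃ w₁ w₂ w₃ = B w₁ ⁅w₂, w₃⁆) := by
  let br : g →ₗ[ℝ] g →ₗ[ℝ] g := LinearMap.mk₂ ℝ (fun x y => ⁅x, y⁆)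
    add_lie (fun c x y => smul_lie c x y) lie_add (fun c x y => lie_smul c x y)
  refine ⟨{ μ₁ := 0, μ₂ := br, μ₂' := 0
            -- currying `⟨[w₁,w₂],w₃⟩`, which equals `⟨w₁,[w₂,w₃]⟩` by invariance
            μ₃ := br.compr₂ B
            μ₂_antisymm := ?_, μ₃_antisymm₁₂ := ?_, μ₃_antisymm₂₃ := ?_
            jacobi₁ := ?_, jacobi₂ := ?_, jacobi₃ := ?_, jacobi₄ := ?_
            jacobi₅ := ?_ }, ?_, ?_, ?_, ?_⟩
  · intro x y
    exact (lie_skew x y).symm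
  · intro x y z
    change B ⁅x, y⁆ z = - B ⁅y, x⁆ z
    rw [← lie_skew x y, map_neg, LinearMap.neg_apply]
  · intro x y z
    change B ⁅x, y⁆ z = - B ⁅x, z⁆ y
    rw [hinv, hinv, ← lie_skew y z, map_neg]
  · intro w v
    simp
  · intro v w
    simp
  · intro x y z
    change (0 : g) = - ⁅⁅x, y⁆, z⁆ - ⁅⁅z, x⁆, y⁆ - ⁅⁅y, z⁆, x⁆
    have h := lie_jacobi x y z
    rw [← lie_skew z ⁅x, y⁆, ← lie_skew y ⁅z, x⁆, ← lie_skew x ⁅y, z⁆] at h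
    rw [← h]
    abel
  · intro v x y
    simp
  · intro a b c d
    have key : B ⁅a, b⁆ ⁅c, d⁆ + B ⁅a, c⁆ ⁅d, b⁆ + B ⁅a, d⁆ ⁅b, c⁆ = 0 := by
      rw [hinv, hinv, hinv, ← map_add, ← map_add, lie_jacobi, map_zero]
    have h₁ : B ⁅a, c⁆ ⁅d, b⁆ = - B ⁅a, c⁆ ⁅b, d⁆ := by
      rw [← lie_skew d b, map_neg]
    have h₂ : B ⁅d, a⁆ ⁅b, c⁆ = - B ⁅a, d⁆ ⁅b, c⁆ := by
      rw [← lie_skew d a, map_neg, LinearMap.neg_apply]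
    simp only [LinearMap.zero_apply]
    change -0 + 0 - 0 + 0 = B ⁅⁅a, b⁆, c⁆ d - B ⁅⁅b, c⁆, d⁆ a + B ⁅⁅c, d⁆, a⁆ b
      - B ⁅⁅d, a⁆, b⁆ c - B ⁅⁅a, c⁆, b⁆ d - B ⁅⁅b, d⁆, a⁆ c
    rw [hinv ⁅a, b⁆, hinv ⁅b, c⁆, hinv ⁅c, d⁆, hinv ⁅d, a⁆, hinv ⁅a, c⁆, hinv ⁅b, d⁆,
      hsymm ⁅b, c⁆, hsymm ⁅c, d⁆, hsymm ⁅b, d⁆]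
    linarith
  · intro v
    rfl
  · intro x y
    rfl
  · intro w v
    rfl
  · intro x y z
    exact hinv x y z
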